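/- Let S be a skew lattice. The operation ∧ is rectangular, i.e. x∧y∧z = x∧z for all x,y,z ∈ S, if and only if the operation ∨ is rectangular, i.e. x∨y∨z = x∨z for all x,y,z ∈ S. -/

import Mathlib

/-!
If `∧` is rectangular, then `∨` is `∧` with its arguments exchanged. Indeed, for `j = x ∨ y`,
inserting the middle factors `y` and then `x` lets the absorption laws `j ∧ y = y` and `x ∧ j = x`
collapse the product: `j = j ∧ j = j ∧ y ∧ j = y ∧ j = y ∧ x ∧ j = y ∧ x`. The converse is the same
argument, since the axioms of a skew lattice are symmetric in the two operations.
-/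

/-- A binary operation is rectangular if a middle factor can be dropped from a triple product.
The triple product is bracketed to the left, as the operation need not be associative. -/
def IsRectangular {S : Type*} (op : S → S → S) : Prop :=
  ∀ x y z : S, op (op x y) z = op x z

namespace IsRectangular

variable {S : Type*} {wedge vee : S → S → S}

local infixl:70 " ⋏ " => wedge
local infixl:70 " ⋎ " => vee

theorem swap (h : IsRectangular wedge) (wedge_assoc : ∀ x y z : S, x ⋏ y ⋏ z = x ⋏ (y ⋏ z)) :
    IsRectangular (Function.swap wedge) :=
  fun x y z => (wedge_assoc z y x).symm.trans (h z y x)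

theorem eq_swap_of_absorption (h : IsRectangular wedge)
    (wedge_idem : ∀ x : S, x ⋏ x = x)
    (wedge_assoc : ∀ x y z : S, x ⋏ y ⋏ z = x ⋏ (y ⋏ z))
    (wedge_vee_self : ∀ x y : S, x ⋏ (x ⋎ y) = x)
    (vee_wedge_self : ∀ x y : S, (y ⋎ x) ⋏ x = x) :
    vee = Function.swap wedge := by
  funext x y
  calc x ⋎ y
    _ = (x ⋎ y) ⋏ (x ⋎ y) := (wedge_idem _).symm
    _ = (x ⋎ y) ⋏ y ⋏ (x ⋎ y) := (h _ _ _).symm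
    _ = y ⋏ (x ⋎ y) := by rw [vee_wedge_self]
    _ = y ⋏ x ⋏ (x ⋎ y) := (h _ _ _).symm
    _ = y ⋏ (x ⋏ (x ⋎ y)) := wedge_assoc _ _ _
    _ = y ⋏ x := by rw [wedge_vee_self]

theorem of_absorption (h : IsRectangular wedge)
    (wedge_idem : ∀ x : S, x ⋏ x = x)
    (wedge_assoc : ∀ x y z : S, x ⋏ y ⋏ z = x ⋏ (y ⋏ z))
    (wedge_vee_self : ∀ x y : S, x ⋏ (x ⋎ y) = x)
    (vee_wedge_self : ∀ x y : S, (y ⋎ x) ⋏ x = x) :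
    IsRectangular vee := by
  rw [h.eq_swap_of_absorption wedge_idem wedge_assoc wedge_vee_self vee_wedge_self]
  exact h.swap wedge_assoc

end IsRectangular

/-- In a skew lattice, ∧ is rectangular iff ∨ is rectangular. -/
theorem wedge_rectangular_iff_vee_rectangular {S : Type*} (wedge vee : S → S → S)
    (wedge_idem : ∀ x : S, wedge x x = x)
    (vee_idem : ∀ x : S, vee x x = x)
    (wedge_assoc : ∀ x y z : S, wedge (wedge x y) z = wedge x (wedge y z))
    (vee_assoc : ∀ x y z : S, vee (vee x y) z = vee x (vee y z))
    (abs₁ : ∀ x y : S, wedge x (vee x y) = x)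
    (abs₂ : ∀ x y : S, wedge (vee y x) x = x)
    (abs₃ : ∀ x y : S, vee x (wedge x y) = x)
    (abs₄ : ∀ x y : S, vee (wedge y x) x = x) :
    (∀ x y z : S, wedge (wedge x y) z = wedge x z) ↔
      (∀ x y z : S, vee (vee x y) z = vee x z) :=
  ⟨fun h => IsRectangular.of_absorption h wedge_idem wedge_assoc abs₁ abs₂,
    fun h => IsRectangular.of_absorption h vee_idem vee_assoc abs₃ abs₄⟩
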